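/- arXiv:math/0702466 — 2 statements merged into one kernel-verified Lean document; each statement's English description precedes it below -/
import Mathlib

section
/- Let M be a countable ultrametric space such that every non-trivial member of Nerv(M) has infinitely many sons. Then the following are equivalent: (i) every local spec-embedding of M whose domain is a singleton extends to an isometric embedding of M into M, and for every B ∈ Nerv(M) the family MSpec(M↾B) := {Spec(M↾B, a) : a ∈ B} is up-directed; (ii) for all y, y', x ∈ M, if Spec(M,y) ⊆ Spec(M,y') then there is some x' with d(y',x') ≤ d(x,y) and Spec(M,x) ⊆ Spec(M,x'), and for every B ∈ Nerv(M) and every a ∈ B, the metric subspace on B embeds isometrically into the metric subspace on B ∩ M(a). -/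
/-- The spectrum of a point `a`: the set of distances from `a`. -/
def SpecAt {M : Type*} [MetricSpace M] (a : M) : Set ℝ := {r | ∃ x : M, dist a x = r}

/-- The spectrum of a metric space: the set of realized distances. -/
def SpecOf (M : Type*) [MetricSpace M] : Set ℝ := {r | ∃ x y : M, dist x y = r}

/-- The spectrum of `a` within a subset `B`. -/
def SpecIn {M : Type*} [MetricSpace M] (B : Set M) (a : M) : Set ℝ := {r | ∃ x ∈ B, dist a x = r}

/-- A metric space is ultrametric if it satisfies the strong triangle inequality. -/
def UltraDist (M : Type*) [MetricSpace M] : Prop :=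
  ∀ x y z : M, dist x z ≤ max (dist x y) (dist y z)

/-- A metric space is indivisible if for every subset `A`, the space embeds isometrically
into `A` or into its complement. -/
def Indiv (M : Type*) [MetricSpace M] : Prop :=
  ∀ A : Set M, (∃ f : M → M, Isometry f ∧ ∀ x, f x ∈ A) ∨
    (∃ f : M → M, Isometry f ∧ ∀ x, f x ∉ A)

/-- A ball: an open or closed ball of nonnegative radius. -/
def IsBallM {M : Type*} [MetricSpace M] (B : Set M) : Prop :=
  ∃ (a : M) (r : ℝ), 0 ≤ r ∧ (B = Metric.ball a r ∨ B = Metric.closedBall a r)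

/-- The nerve of a metric space: closed balls whose radius is a realized distance
from the center. -/
def NervOf (M : Type*) [MetricSpace M] : Set (Set M) :=
  {B | ∃ (a : M) (r : ℝ), r ∈ SpecAt a ∧ B = Metric.closedBall a r}

/-- The sons of a set `B` of diameter `r`: the open balls of radius `r` centered in `B`. -/
def SonOf {M : Type*} [MetricSpace M] (B : Set M) : Set (Set M) :=
  {S | ∃ a ∈ B, S = Metric.ball a (Metric.diam B)}

/-- A space is spec-endogeneous when every local spec-embedding extends to an
isometric self-embedding. -/
def SpecEndog (M : Type*) [MetricSpace M] : Prop :=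
  ∀ (A : Set M) (f : M → M),
    (∀ x ∈ A, ∀ y ∈ A, dist (f x) (f y) = dist x y) →
    (∀ x ∈ A, SpecAt x ⊆ SpecAt (f x)) →
    ∃ g : M → M, Isometry g ∧ ∀ x ∈ A, g x = f x

/-- The spec-extension property. -/
def SpecExt (M : Type*) [MetricSpace M] : Prop :=
  ∀ x y y' : M, x ≠ y → SpecAt y ⊆ SpecAt y' →
    ∃ x' : M, dist y' x' = dist x y ∧ SpecAt x ⊆ SpecAt x'

/-- The infinite spec-extension property. -/
def InfSpecExt (M : Type*) [MetricSpace M] : Prop :=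
  ∀ x y y' : M, x ≠ y → SpecAt y ⊆ SpecAt y' →
    ∃ S : Set M, S.Infinite ∧
      (∀ z ∈ S, dist y' z = dist x y ∧ SpecAt x ⊆ SpecAt z) ∧
      (∀ z ∈ S, ∀ z' ∈ S, z ≠ z' → dist z z' = dist x y)

/-!
For (i) ⇒ (ii), if `w` and `c` lie in a member `B` of the nerve, some `d ∈ B` dominates both spectra
and some isometry `g` sends `w` to `d`. It maps `B ∩ M(c)` into itself; were the sons of `B` meeting
`M(c)` finite in number, `g` would permute them, so the son of `w` would be one of them. As `w` is
arbitrary and `B` has infinitely many sons, infinitely many of these meet `M(c)`. In (ii) an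
isometry `B → B ∩ M(c)` gives the same conclusion at once.

In either case a finite partial isometry extends to a further point `x`: spec-extension from the
nearest point of the domain locates the image of `x` up to the distance `r` of `x` from the
domain, and among infinitely many sons of that `r`-ball one avoids the finite range. Countability
turns these one-point extensions into a global isometry, and directedness keeps the spectra of all
values above any given spectrum.
-/

open Metric Set

section PartialIsometry

variable {X Y : Type*} [PseudoMetricSpace X]

/-- The graph of a partial isometry from `X` to `Y` whose pairs are all related by `R`. Graphs are
sets of pairs, so that extension of partial isometries is inclusion. -/
def IsPartialIsometry [PseudoMetricSpace Y] (R : X → Y → Prop) (S : Set (X × Y)) : Prop :=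
  (∀ p ∈ S, R p.1 p.2) ∧ ∀ p ∈ S, ∀ q ∈ S, dist p.2 q.2 = dist p.1 q.1

theorem isPartialIsometry_singleton [PseudoMetricSpace Y] {R : X → Y → Prop} {x : X} {y : Y}
    (h : R x y) : IsPartialIsometry R {(x, y)} := by
  simpa [IsPartialIsometry] using h

theorem IsPartialIsometry.insert [PseudoMetricSpace Y] {R : X → Y → Prop} {S : Set (X × Y)}
    (hS : IsPartialIsometry R S) {x : X} {y : Y} (hR : R x y)
    (hdist : ∀ p ∈ S, dist y p.2 = dist x p.1) : IsPartialIsometry R (insert (x, y) S) := by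
  refine ⟨forall_mem_insert.2 ⟨hR, hS.1⟩, forall_mem_insert.2 ⟨?_, fun p hp => ?_⟩⟩
  · exact forall_mem_insert.2 ⟨by simp only [dist_self], hdist⟩
  · refine forall_mem_insert.2 ⟨?_, hS.2 p hp⟩
    rw [dist_comm, dist_comm p.1, hdist p hp]

theorem exists_isometry_of_isPartialIsometry_insert [MetricSpace Y] [Countable X]
    {R : X → Y → Prop} {S₀ : Set (X × Y)} (hfin : S₀.Finite) (h₀ : IsPartialIsometry R S₀)
    (hext : ∀ S, S₀ ⊆ S → S.Finite → IsPartialIsometry R S →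
      ∀ x, ∃ y, IsPartialIsometry R (insert (x, y) S)) :
    ∃ g : X → Y, Isometry g ∧ (∀ p ∈ S₀, g p.1 = p.2) ∧ ∀ x, R x (g x) := by
  have := Encodable.ofCountable X
  let P := {S : Set (X × Y) // S₀ ⊆ S ∧ S.Finite ∧ IsPartialIsometry R S}
  let definedAt (x : X) : Order.Cofinal P :=
    { carrier := {S | ∃ y, (x, y) ∈ S.1}
      isCofinal := fun ⟨S, hS₀, hSfin, hS⟩ =>
        let ⟨y, hy⟩ := hext S hS₀ hSfin hS x
        ⟨⟨insert (x, y) S, hS₀.trans (subset_insert _ _), hSfin.insert _, hy⟩,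
          ⟨y, mem_insert _ _⟩, subset_insert _ _⟩ }
  let start : P := ⟨S₀, Subset.rfl, hfin, h₀⟩
  let I := Order.idealOfCofinals start definedAt
  have total (x : X) : ∃ y, ∃ S ∈ I, (x, y) ∈ S.1 :=
    let ⟨S, ⟨y, hy⟩, hS⟩ := Order.cofinal_meets_idealOfCofinals start definedAt x
    ⟨y, S, hS, hy⟩
  choose g graph hgraph hg using total
  have dist_eq {S T : P} (hS : S ∈ I) (hT : T ∈ I) {p q : X × Y} (hp : p ∈ S.1) (hq : q ∈ T.1) :
      dist p.2 q.2 = dist p.1 q.1 := by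
    obtain ⟨U, -, hSU, hTU⟩ := I.directed S hS T hT
    exact U.2.2.2.2 p (hSU hp) q (hTU hq)
  refine ⟨g, .of_dist_eq fun x y => dist_eq (hgraph x) (hgraph y) (hg x) (hg y), ?_, ?_⟩
  · intro p hp
    have hstart : start ∈ I := Order.mem_idealOfCofinals start definedAt
    rw [← dist_eq_zero, dist_eq (hgraph p.1) hstart (hg p.1) hp, dist_self]
  · exact fun x => (graph x).2.2.2.1 _ (hg x)

end PartialIsometry

section Ultrametric

variable {X Y : Type*} [PseudoMetricSpace X] [IsUltrametricDist X]

theorem dist_eq_max_of_dist_le {x p q : X} (h : dist x p ≤ dist x q) :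
    dist x q = max (dist x p) (dist p q) := by
  refine (dist_triangle_max x p q).antisymm (max_le h ?_)
  exact (dist_triangle_max p x q).trans (max_le (dist_comm p x ▸ h) le_rfl)

theorem dist_eq_of_notMem_closedBall {b u w x : X} {r : ℝ} (hu : u ∈ closedBall b r)
    (hw : w ∈ closedBall b r) (hx : x ∉ closedBall b r) : dist u x = dist w x := by
  have dist_le {u w : X} (hu : u ∈ closedBall b r) (hw : w ∈ closedBall b r) :
      dist u x ≤ dist w x := by
    rw [IsUltrametricDist.closedBall_eq_of_mem hw, mem_closedBall] at hu hx
    rw [dist_comm, not_le] at hx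
    exact (dist_triangle_max u w x).trans (max_le (hu.trans hx.le) le_rfl)
  exact (dist_le hu hw).antisymm (dist_le hw hu)

theorem mapsTo_closedBall_of_isometry [PseudoMetricSpace Y] [IsUltrametricDist Y] {g : X → Y}
    (hg : Isometry g) {b w : X} {c : Y} {r : ℝ} (hw : w ∈ closedBall b r)
    (hgw : g w ∈ closedBall c r) : MapsTo g (closedBall b r) (closedBall c r) := by
  rw [IsUltrametricDist.closedBall_eq_of_mem hw, IsUltrametricDist.closedBall_eq_of_mem hgw]
  exact hg.mapsTo_closedBall w r

theorem exists_mem_forall_le_dist_of_infinite_balls {T F : Set X} {r : ℝ}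
    (hT : ((ball · r) '' T).Infinite) (hF : F.Finite) : ∃ x ∈ T, ∀ z ∈ F, r ≤ dist x z := by
  obtain ⟨-, ⟨x, hx, rfl⟩, hxF⟩ := hT.exists_notMem_finite (hF.image (ball · r))
  refine ⟨x, hx, fun z hz => not_lt.1 fun hlt => hxF ⟨z, hz, ?_⟩⟩
  exact IsUltrametricDist.ball_eq_of_mem (mem_ball.2 hlt)

theorem exists_isometry_of_exists_far [MetricSpace Y] [IsUltrametricDist Y] [Countable X]
    {R : X → Y → Prop}
    (hext : ∀ x₀ y₀, R x₀ y₀ → ∀ x, ∀ F : Set Y, F.Finite →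
      ∃ y, R x y ∧ dist y y₀ ≤ dist x x₀ ∧ ∀ z ∈ F, dist x x₀ ≤ dist y z)
    {a : X} {b : Y} (hab : R a b) : ∃ g : X → Y, Isometry g ∧ g a = b ∧ ∀ x, R x (g x) := by
  obtain ⟨g, hg, hgS, hgR⟩ := exists_isometry_of_isPartialIsometry_insert (finite_singleton (a, b))
    (isPartialIsometry_singleton hab) fun S hab_mem hfin hS x => by
      obtain ⟨p, hp, nearest⟩ :=
        exists_min_image S (fun q => dist x q.1) hfin ⟨_, singleton_subset_iff.1 hab_mem⟩
      obtain ⟨y, hy, y_near, y_far⟩ :=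
        hext p.1 p.2 (hS.1 p hp) x (Prod.snd '' S) (hfin.image _)
      rw [forall_mem_image] at y_far
      have dist_y_p : dist y p.2 = dist x p.1 := y_near.antisymm (y_far hp)
      refine ⟨y, hS.insert hy fun q hq => ?_⟩
      rw [dist_eq_max_of_dist_le (nearest q hq), ← hS.2 p hp q hq, ← dist_y_p]
      exact dist_eq_max_of_dist_le (dist_y_p ▸ y_far hq)
  exact ⟨g, hg, hgS _ rfl, hgR⟩

end Ultrametric

theorem ball_mem_image_of_mapsTo {X : Type*} [PseudoMetricSpace X] {T : Set X} {r : ℝ} {g : X → X}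
    (hfin : ((ball · r) '' T).Finite) (hg : Isometry g) (hT : MapsTo g T T) {w : X}
    (hw : g w ∈ T) : ball w r ∈ (ball · r) '' T := by
  -- `U ↦ g⁻¹' U` hits each of the finitely many `r`-balls centred in `T`, hence permutes them.
  have hsub : (ball · r) '' T ⊆ preimage g '' ((ball · r) '' T) := by
    rintro - ⟨x, hx, rfl⟩
    exact ⟨_, mem_image_of_mem _ (hT hx), hg.preimage_ball x r⟩
  rw [eq_of_subset_of_ncard_le hsub (ncard_image_le hfin) (hfin.image _)]
  exact ⟨_, mem_image_of_mem _ hw, hg.preimage_ball w r⟩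

theorem infinite_balls_of_isometry {X Y : Type*} [PseudoMetricSpace X] [PseudoMetricSpace Y]
    {f : X → Y} (hf : Isometry f) {T : Set X} {r : ℝ} (hT : ((ball · r) '' T).Infinite) :
    ((ball · r) '' (f '' T)).Infinite := by
  refine fun hfin => hT ((hfin.image (preimage f)).subset ?_)
  rintro - ⟨x, hx, rfl⟩
  exact ⟨_, mem_image_of_mem _ (mem_image_of_mem f hx), hf.preimage_ball x r⟩

section Spectrum

variable {M : Type*} [MetricSpace M]

theorem dist_mem_specAt (a x : M) : dist x a ∈ SpecAt a := ⟨x, dist_comm a x⟩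

theorem specAt_subset_of_isometry {g : M → M} (hg : Isometry g) (x : M) :
    SpecAt x ⊆ SpecAt (g x) := by
  rintro - ⟨z, rfl⟩
  exact ⟨g z, hg.dist_eq x z⟩

variable [IsUltrametricDist M]

theorem specIn_closedBall {b u : M} {r : ℝ} (hu : u ∈ closedBall b r) :
    SpecIn (closedBall b r) u = SpecAt u ∩ Iic r := by
  rw [IsUltrametricDist.closedBall_eq_of_mem hu]
  ext t
  constructor
  · rintro ⟨x, hx, rfl⟩
    exact ⟨⟨x, rfl⟩, mem_closedBall'.1 hx⟩
  · rintro ⟨⟨x, rfl⟩, hx⟩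
    exact ⟨x, mem_closedBall'.2 hx, rfl⟩

theorem specIn_closedBall_subset_iff {b u w : M} {r : ℝ} (hu : u ∈ closedBall b r)
    (hw : w ∈ closedBall b r) :
    SpecIn (closedBall b r) u ⊆ SpecIn (closedBall b r) w ↔ SpecAt u ⊆ SpecAt w := by
  constructor
  · rintro h - ⟨x, rfl⟩
    by_cases hx : x ∈ closedBall b r
    · obtain ⟨z, -, hz⟩ := h ⟨x, hx, rfl⟩
      exact ⟨z, hz⟩
    · exact ⟨x, (dist_eq_of_notMem_closedBall hu hw hx).symm⟩
  · rw [specIn_closedBall hu, specIn_closedBall hw]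
    exact inter_subset_inter_left _

theorem diam_closedBall_of_mem_specAt {b : M} {r : ℝ} (hr : r ∈ SpecAt b) :
    diam (closedBall b r) = r := by
  obtain ⟨x, rfl⟩ := hr
  refine (diam_le_of_forall_dist_le dist_nonneg fun p hp q hq => ?_).antisymm ?_
  · rwa [IsUltrametricDist.closedBall_eq_of_mem hq] at hp
  · exact dist_le_diam_of_mem isBounded_closedBall (mem_closedBall_self dist_nonneg)
      (dist_comm b x).ge

end Spectrum

section Properties

variable (M : Type*) [MetricSpace M]

/-- Every local spec-embedding defined at a single point extends to an isometric
self-embedding. -/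
def SpecHomogeneous : Prop :=
  ∀ y y' : M, SpecAt y ⊆ SpecAt y' → ∃ g : M → M, Isometry g ∧ g y = y'

/-- The spectra of the points of `B`, computed in `B`, are up-directed for each `B` in the nerve. -/
def SpecDirected : Prop :=
  ∀ B ∈ NervOf M, ∀ a ∈ B, ∀ b ∈ B, ∃ c ∈ B, SpecIn B a ⊆ SpecIn B c ∧ SpecIn B b ⊆ SpecIn B c

/-- The weakening of the spec-extension property `SpecExt` in which the distance to the new point
is only bounded above. -/
def WeakSpecExt : Prop :=
  ∀ y y' x : M, SpecAt y ⊆ SpecAt y' → ∃ x' : M, dist y' x' ≤ dist x y ∧ SpecAt x ⊆ SpecAt x'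

/-- Each member `B` of the nerve embeds isometrically into `B ∩ M(a)` for every `a ∈ B`. -/
def NerveEmbedsAbove : Prop :=
  ∀ B ∈ NervOf M, ∀ a ∈ B, ∃ f : ↥B → ↥(B ∩ {y | SpecAt a ⊆ SpecAt y}), Isometry f

/-- Every non-trivial member of the nerve has infinitely many sons. -/
def InfinitelyManySons : Prop :=
  ∀ B ∈ NervOf M, B.Nontrivial → (SonOf B).Infinite

/-- For each non-trivial member `B` of the nerve and each `c ∈ B`, infinitely many sons of `B` meet
`M(c)`. As `B` is a closed ball of diameter `r`, its sons are written as open `r`-balls. -/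
def InfinitelyManySonsAbove : Prop :=
  ∀ (b c : M) (r : ℝ), 0 < r → r ∈ SpecAt b → c ∈ closedBall b r →
    ((ball · r) '' (closedBall b r ∩ {y | SpecAt c ⊆ SpecAt y})).Infinite

end Properties

section Equivalence

variable {M : Type*} [MetricSpace M]

theorem SpecHomogeneous.weakSpecExt (hhom : SpecHomogeneous M) : WeakSpecExt M := by
  intro y y' x h
  obtain ⟨g, hg, rfl⟩ := hhom y y' h
  exact ⟨g x, by rw [hg.dist_eq, dist_comm], specAt_subset_of_isometry hg x⟩

variable [IsUltrametricDist M]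

theorem InfinitelyManySons.infinite_balls (hsons : InfinitelyManySons M) {b : M} {r : ℝ}
    (hr : 0 < r) (hrb : r ∈ SpecAt b) : ((ball · r) '' closedBall b r).Infinite := by
  have nontrivial : (closedBall b r).Nontrivial := by
    obtain ⟨x, rfl⟩ := hrb
    exact ⟨b, mem_closedBall_self hr.le, x, (dist_comm b x).ge, dist_pos.1 hr⟩
  have hinf := hsons _ ⟨b, r, hrb, rfl⟩ nontrivial
  have sons_eq : SonOf (closedBall b r) = (ball · r) '' closedBall b r := by
    ext S
    simp only [SonOf, diam_closedBall_of_mem_specAt hrb, mem_ofPred_eq, mem_image, eq_comm]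
  rwa [sons_eq] at hinf

theorem SpecDirected.exists_specAt_subset (hdir : SpecDirected M) {b u v : M} {r : ℝ}
    (hrb : r ∈ SpecAt b) (hu : u ∈ closedBall b r) (hv : v ∈ closedBall b r) :
    ∃ w ∈ closedBall b r, SpecAt u ⊆ SpecAt w ∧ SpecAt v ⊆ SpecAt w := by
  obtain ⟨w, hw, huw, hvw⟩ := hdir _ ⟨b, r, hrb, rfl⟩ u hu v hv
  exact ⟨w, hw, (specIn_closedBall_subset_iff hu hw).1 huw,
    (specIn_closedBall_subset_iff hv hw).1 hvw⟩

theorem SpecHomogeneous.infinitelyManySonsAbove (hhom : SpecHomogeneous M) (hdir : SpecDirected M)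
    (hsons : InfinitelyManySons M) : InfinitelyManySonsAbove M := by
  intro b c r hr hrb hc hfin
  obtain ⟨-, ⟨w, hw, rfl⟩, hw_notMem⟩ := (hsons.infinite_balls hr hrb).exists_notMem_finite hfin
  obtain ⟨d, hd, hwd, hcd⟩ := hdir.exists_specAt_subset hrb hw hc
  obtain ⟨g, hg, rfl⟩ := hhom w d hwd
  have mapsTo : MapsTo g (closedBall b r ∩ {y | SpecAt c ⊆ SpecAt y})
      (closedBall b r ∩ {y | SpecAt c ⊆ SpecAt y}) := fun p hp =>
    ⟨mapsTo_closedBall_of_isometry hg hw hd hp.1, hp.2.trans (specAt_subset_of_isometry hg p)⟩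
  exact hw_notMem (ball_mem_image_of_mapsTo hfin hg mapsTo ⟨hd, hcd⟩)

theorem NerveEmbedsAbove.infinitelyManySonsAbove (hemb : NerveEmbedsAbove M)
    (hsons : InfinitelyManySons M) : InfinitelyManySonsAbove M := by
  intro b c r hr hrb hc
  obtain ⟨f, hf⟩ := hemb _ ⟨b, r, hrb, rfl⟩ c hc
  have balls_infinite : ((ball · r) '' (univ : Set (closedBall b r))).Infinite := by
    refine fun hfin => hsons.infinite_balls hr hrb ((hfin.image (image Subtype.val)).subset ?_)
    rintro - ⟨x, hx, rfl⟩
    refine ⟨_, mem_image_of_mem _ (mem_univ ⟨x, hx⟩), (Subtype.image_ball _ r).trans ?_⟩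
    exact inter_eq_left.2
      (ball_subset_closedBall.trans (IsUltrametricDist.closedBall_eq_of_mem hx).ge)
  refine (infinite_balls_of_isometry (isometry_subtype_coe.comp hf) balls_infinite).mono ?_
  refine image_mono ?_
  rintro - ⟨x, -, rfl⟩
  exact (f x).2

theorem NerveEmbedsAbove.specDirected (hemb : NerveEmbedsAbove M) : SpecDirected M := by
  intro B hB a ha b hb
  obtain ⟨f, hf⟩ := hemb B hB a ha
  obtain ⟨hc, hac⟩ := (f ⟨b, hb⟩).2
  refine ⟨f ⟨b, hb⟩, hc, ?_, ?_⟩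
  · obtain ⟨_, _, -, rfl⟩ := hB
    exact (specIn_closedBall_subset_iff ha hc).2 hac
  · rintro - ⟨x, hx, rfl⟩
    exact ⟨f ⟨x, hx⟩, (f ⟨x, hx⟩).2.1, hf.dist_eq _ _⟩

theorem WeakSpecExt.exists_specAt_subset (hext : WeakSpecExt M) (hdir : SpecDirected M)
    {A : Set ℝ} {y y' : M} (x : M) (hyy' : SpecAt y ⊆ SpecAt y') (hA : A ⊆ SpecAt y') :
    ∃ x' : M, dist y' x' ≤ dist x y ∧ SpecAt x ⊆ SpecAt x' ∧ A ⊆ SpecAt x' := by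
  obtain ⟨x₁, hx₁, hxx₁⟩ := hext y y' x hyy'
  obtain ⟨x', hx', hy'x', hx₁x'⟩ := hdir.exists_specAt_subset (hyy' (dist_mem_specAt y x))
    (mem_closedBall_self dist_nonneg) (mem_closedBall'.2 hx₁)
  exact ⟨x', mem_closedBall'.1 hx', hxx₁.trans hx₁x', hA.trans hy'x'⟩

theorem WeakSpecExt.exists_isometry [Countable M] (hext : WeakSpecExt M) (hdir : SpecDirected M)
    (hsons : InfinitelyManySonsAbove M) {A : Set ℝ} {y y' : M} (hyy' : SpecAt y ⊆ SpecAt y')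
    (hA : A ⊆ SpecAt y') : ∃ g : M → M, Isometry g ∧ g y = y' ∧ ∀ x, A ⊆ SpecAt (g x) := by
  let R (x x' : M) : Prop := SpecAt x ⊆ SpecAt x' ∧ A ⊆ SpecAt x'
  suffices far_ext : ∀ y y', R y y' → ∀ x, ∀ F : Set M, F.Finite →
      ∃ x', R x x' ∧ dist x' y' ≤ dist x y ∧ ∀ z ∈ F, dist x y ≤ dist x' z by
    obtain ⟨g, hg, hgy, hgR⟩ := exists_isometry_of_exists_far far_ext ⟨hyy', hA⟩
    exact ⟨g, hg, hgy, fun x => (hgR x).2⟩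
  intro y y' hR x F hF
  obtain ⟨c, hc, hxc, hAc⟩ := hext.exists_specAt_subset hdir x hR.1 hR.2
  rw [dist_comm] at hc
  rcases (dist_nonneg (x := x) (y := y)).eq_or_lt with hr | hr
  · exact ⟨c, ⟨hxc, hAc⟩, hc, fun z _ => hr ▸ dist_nonneg⟩
  · obtain ⟨x', ⟨hx', hcx'⟩, hfar⟩ := exists_mem_forall_le_dist_of_infinite_balls
      (hsons y' c _ hr (hR.1 (dist_mem_specAt y x)) hc) hF
    exact ⟨x', ⟨hxc.trans hcx', hAc.trans hcx'⟩, hx', hfar⟩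

theorem WeakSpecExt.specHomogeneous [Countable M] (hext : WeakSpecExt M) (hdir : SpecDirected M)
    (hsons : InfinitelyManySonsAbove M) : SpecHomogeneous M := by
  intro y y' hyy'
  obtain ⟨g, hg, hgy, -⟩ := hext.exists_isometry hdir hsons hyy' (empty_subset _)
  exact ⟨g, hg, hgy⟩

theorem WeakSpecExt.nerveEmbedsAbove [Countable M] (hext : WeakSpecExt M) (hdir : SpecDirected M)
    (hsons : InfinitelyManySonsAbove M) : NerveEmbedsAbove M := by
  rintro - ⟨b, r, hrb, rfl⟩ a ha
  have hb : b ∈ closedBall b r := mem_closedBall_self (nonempty_closedBall.1 ⟨a, ha⟩)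
  obtain ⟨c, hc, hbc, hac⟩ := hdir.exists_specAt_subset hrb hb ha
  obtain ⟨g, hg, rfl, hga⟩ := hext.exists_isometry hdir hsons hbc hac
  exact ⟨fun x => ⟨g x, mapsTo_closedBall_of_isometry hg hb hc x.2, hga x⟩,
    .of_dist_eq fun x y => hg.dist_eq x y⟩

end Equivalence

/-- Equivalence of two properties for countable ultrametric spaces whose
nontrivial nerve members have infinitely many sons. -/
theorem stmt_7 {M : Type*} [MetricSpace M] [Countable M] (hM : UltraDist M)
    (hsons : ∀ B ∈ NervOf M, B.Nontrivial → (SonOf B).Infinite) :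
    ((∀ y y' : M, SpecAt y ⊆ SpecAt y' → ∃ g : M → M, Isometry g ∧ g y = y') ∧
      (∀ B ∈ NervOf M, ∀ a ∈ B, ∀ b ∈ B, ∃ c ∈ B,
        SpecIn B a ⊆ SpecIn B c ∧ SpecIn B b ⊆ SpecIn B c)) ↔
    ((∀ y y' x : M, SpecAt y ⊆ SpecAt y' →
        ∃ x' : M, dist y' x' ≤ dist x y ∧ SpecAt x ⊆ SpecAt x') ∧
      (∀ B ∈ NervOf M, ∀ a ∈ B,
        ∃ f : ↥B → ↥(B ∩ {y | SpecAt a ⊆ SpecAt y}), Isometry f)) := by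
  have : IsUltrametricDist M := ⟨hM⟩
  have hsons : InfinitelyManySons M := hsons
  change SpecHomogeneous M ∧ SpecDirected M ↔ WeakSpecExt M ∧ NerveEmbedsAbove M
  constructor
  · rintro ⟨hhom, hdir⟩
    have hext := hhom.weakSpecExt
    exact ⟨hext, hext.nerveEmbedsAbove hdir (hhom.infinitelyManySonsAbove hdir hsons)⟩
  · rintro ⟨hext, hemb⟩
    have hdir := hemb.specDirected
    exact ⟨hext.specHomogeneous hdir (hemb.infinitelyManySonsAbove hsons), hdir⟩
end

section
/- Let M be an ultrametric space endowed with a compatible binary operation +, whose diameter r := δ(M) > 0 is attained, and suppose M has infinitely many sons (infinitely many distinct sets of the form {x ∈ M : d(a,x) < r}, a ∈ M). Then for each son B of M there are infinitely many sons B' of M such that the metric subspace on B embeds isometrically into the metric subspace on B'. -/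
/-!
Left translation by `c` carries the ball of radius `r` around `a` isometrically into the one around
`c + a`. Right translation by `a` is an isometry too, so its preimage map sends the ball around
`c + a` back to the one around `c`: the targets are at least as numerous as the balls of radius `r`.
-/

section

open Metric Set

theorem sonOf_univ (M : Type*) [MetricSpace M] :
    SonOf (univ : Set M) = range fun a : M ↦ ball a (diam (univ : Set M)) := by
  ext S
  simp only [SonOf, mem_univ, true_and, mem_ofPred_eq, mem_range, eq_comm]

theorem infinite_range_ball_comp_of_isometry {X Y : Type*} [PseudoMetricSpace X]
    [PseudoMetricSpace Y] {f : X → Y} (hf : Isometry f) {r : ℝ}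
    (hballs : (range fun x : X ↦ ball x r).Infinite) :
    (range fun x : X ↦ ball (f x) r).Infinite := by
  have preimage_balls :
      preimage f '' range (fun x ↦ ball (f x) r) = range fun x ↦ ball x r := by
    simp only [← range_comp, Function.comp_def, hf.preimage_ball]
  exact Infinite.of_image (preimage f) (preimage_balls ▸ hballs)

theorem exists_isometry_ball_ball {X Y : Type*} [PseudoMetricSpace X] [PseudoMetricSpace Y]
    {f : X → Y} (hf : Isometry f) (x : X) (r : ℝ) :
    ∃ g : ball x r → ball (f x) r, Isometry g :=
  ⟨(hf.mapsTo_ball x r).restrict, fun y z ↦ hf y z⟩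

theorem stmt_19_general {M : Type*} [PseudoMetricSpace M] (op : M → M → M)
    (hl : ∀ c, Isometry (op c)) (hr : ∀ a, Isometry (op · a)) {r : ℝ}
    (hballs : (range fun a : M ↦ ball a r).Infinite) :
    ∀ B ∈ range (fun a : M ↦ ball a r),
      {B' | B' ∈ range (fun a : M ↦ ball a r) ∧ ∃ f : B → B', Isometry f}.Infinite := by
  rintro _ ⟨a, rfl⟩
  refine (infinite_range_ball_comp_of_isometry (hr a) hballs).mono ?_
  rintro _ ⟨c, rfl⟩
  exact ⟨mem_range_self (op c a), exists_isometry_ball_ball (hl c) a r⟩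

end

/-- In an ultrametric space with a compatible operation whose positive
diameter is attained and which has infinitely many sons, each son embeds
isometrically into infinitely many sons. -/
theorem stmt_19 {M : Type*} [MetricSpace M] (hM : UltraDist M)
    (op : M → M → M)
    (hl : ∀ x y z : M, dist (op z x) (op z y) = dist x y)
    (hr : ∀ x y z : M, dist (op x z) (op y z) = dist x y)
    (hpos : 0 < Metric.diam (Set.univ : Set M))
    (hatt : ∃ x y : M, dist x y = Metric.diam (Set.univ : Set M))
    (hsons : (SonOf (Set.univ : Set M)).Infinite) :
    ∀ B ∈ SonOf (Set.univ : Set M),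
      {B' | B' ∈ SonOf (Set.univ : Set M) ∧ ∃ f : ↥B → ↥B', Isometry f}.Infinite := by
  rw [sonOf_univ] at hsons ⊢
  exact stmt_19_general op (fun c ↦ .of_dist_eq (hl · · c)) (fun a ↦ .of_dist_eq (hr · · a)) hsons
end
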